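/- Let Cens be a truthful, effective, continuous and minimally invasive censor, let (KB, AK, Sec) be a privacy configuration and q a query sequence. Let i be the least natural number such that Cens_PK(q)_i ≠ eval(KB, q_i), and let Cens' be any censor such that Cens'_PK(q)|_{i−1} = Cens_PK(q)|_{i−1} and Cens'_PK(q)_i = eval(KB, q_i). Then cont(Cens'_PK(q), i) ⊨ □s for some s ∈ Sec. -/

import Mathlib

/-- A logic: a set (type) of formulas with a consequence relation satisfying
reflexivity, weakening and transitivity (cut). -/
structure Logic where
  Fml : Type
  Proves : Set Fml → Fml → Prop
  refl : ∀ A : Fml, Proves {A} A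
  weaken : ∀ (Γ Δ : Set Fml) (A : Fml), Proves Γ A → Proves (Γ ∪ Δ) A
  cut : ∀ (Γ Δ : Set Fml) (C A : Fml),
    Proves Γ C → Proves (Δ ∪ {C}) A → Proves (Γ ∪ Δ) A

/-- Modal formulas over a logic `L`: boxed `L`-formulas, falsum, implication. -/
inductive MFml (L : Logic) : Type where
  | box : L.Fml → MFml L
  | bot : MFml L
  | imp : MFml L → MFml L → MFml L

/-- ¬A := A → ⊥ -/
def MFml.neg {L : Logic} (A : MFml L) : MFml L := MFml.imp A MFml.bot

/-- ⊤ := ⊥ → ⊥ -/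
def MFml.top {L : Logic} : MFml L := MFml.imp MFml.bot MFml.bot

/-- A ∨ B := ¬A → B -/
def MFml.or {L : Logic} (A B : MFml L) : MFml L := MFml.imp (MFml.neg A) B

/-- An M-model is a set of sets of `L`-formulas. -/
abbrev MModel (L : Logic) := Set (Set L.Fml)

/-- Truth of a modal formula in an M-model. -/
def Sat {L : Logic} (M : MModel L) : MFml L → Prop
  | MFml.box A => ∀ w ∈ M, L.Proves w A
  | MFml.bot => False
  | MFml.imp A B => Sat M A → Sat M B

/-- `M ⊩ Γ`. -/
def SatSet {L : Logic} (M : MModel L) (Γ : Set (MFml L)) : Prop :=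
  ∀ A ∈ Γ, Sat M A

/-- Γ is satisfiable. -/
def Satisfiable {L : Logic} (Γ : Set (MFml L)) : Prop :=
  ∃ M : MModel L, SatSet M Γ

/-- Γ ⊨ A. -/
def Entails {L : Logic} (Γ : Set (MFml L)) (A : MFml L) : Prop :=
  ∀ M : MModel L, SatSet M Γ → Sat M A

/-- A privacy configuration (KB, AK, Sec). -/
structure PrivacyConfig (L : Logic) where
  KB : Set L.Fml
  AK : Set (MFml L)
  Sec : Set L.Fml
  consistent : ∃ A : L.Fml, ¬ L.Proves KB A
  truthfulStart : ∀ A ∈ AK, Sat ({KB} : MModel L) A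
  hiddenSecrets : ∀ s ∈ Sec, ¬ Entails AK (MFml.box s)

/-- The answers 𝔸 = {t, u, r}. -/
inductive Ans : Type
  | t | u | r
deriving DecidableEq

open Classical in
/-- eval(KB, q) := t if KB ⊢ q and u otherwise. -/
noncomputable def evalKB (L : Logic) (KB : Set L.Fml) (q : L.Fml) : Ans :=
  if L.Proves KB q then Ans.t else Ans.u

/-- A censor assigns an answering function (on infinite query sequences,
indexed by ℕ) to each privacy configuration. -/
abbrev Censor (L : Logic) := PrivacyConfig L → (ℕ → L.Fml) → (ℕ → Ans)

/-- A censor is continuous iff answers on an initial segment only depend on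
the queries in that initial segment. -/
def ContinuousCensor {L : Logic} (Cens : Censor L) : Prop :=
  ∀ (PK : PrivacyConfig L) (q q' : ℕ → L.Fml) (n : ℕ),
    (∀ i < n, q i = q' i) → ∀ i < n, Cens PK q i = Cens PK q' i

/-- A censor is truthful iff each answer is either the correct evaluation or refusal. -/
def Truthful {L : Logic} (Cens : Censor L) : Prop :=
  ∀ (PK : PrivacyConfig L) (q : ℕ → L.Fml) (i : ℕ),
    Cens PK q i = evalKB L PK.KB (q i) ∨ Cens PK q i = Ans.r

/-- Content of an answer to a query. -/
def contAns {L : Logic} (q : L.Fml) : Ans → MFml L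
  | Ans.t => MFml.box q
  | Ans.u => MFml.neg (MFml.box q)
  | Ans.r => MFml.top

/-- The content of the answers of a censor to a query sequence up to `n`
(0-based: queries with index `< n`), including the a priori knowledge. -/
def cont {L : Logic} (Cens : Censor L) (PK : PrivacyConfig L)
    (q : ℕ → L.Fml) (n : ℕ) : Set (MFml L) :=
  {F | ∃ i < n, F = contAns (q i) (Cens PK q i)} ∪ PK.AK

/-- The full content of a knowledge base. -/
noncomputable def fullContent (L : Logic) (KB : Set L.Fml) : Set (MFml L) :=
  {F | ∃ A : L.Fml, F = contAns A (evalKB L KB A)}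

/-- A censor is credible iff the content of its answers is always satisfiable. -/
def Credible {L : Logic} (Cens : Censor L) : Prop :=
  ∀ (PK : PrivacyConfig L) (q : ℕ → L.Fml) (n : ℕ), Satisfiable (cont Cens PK q n)

/-- A censor is effective iff the content of its answers never entails a boxed secret. -/
def Effective {L : Logic} (Cens : Censor L) : Prop :=
  ∀ (PK : PrivacyConfig L) (q : ℕ → L.Fml) (n : ℕ),
    ∀ s ∈ PK.Sec, ¬ Entails (cont Cens PK q n) (MFml.box s)

/-- A censor is minimally invasive iff whenever it distorts an answer,
replacing that answer by the correct evaluation (keeping the earlier answers)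
would violate effectiveness or credibility. -/
def MinimallyInvasive {L : Logic} (Cens : Censor L) : Prop :=
  ∀ (PK : PrivacyConfig L) (q : ℕ → L.Fml) (i : ℕ),
    Cens PK q i ≠ evalKB L PK.KB (q i) →
    ∀ Cens' : Censor L,
      (∀ j < i, Cens' PK q j = Cens PK q j) →
      Cens' PK q i = evalKB L PK.KB (q i) →
      ∃ n : ℕ,
        (∃ s ∈ PK.Sec, Entails (cont Cens' PK q n) (MFml.box s)) ∨
        ¬ Satisfiable (cont Cens' PK q n)

/-- A censor is repudiating iff for every privacy configuration and query
sequence there are alternative knowledge bases, not entailing any secret,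
producing the same answers on each initial segment. -/
def Repudiating {L : Logic} (Cens : Censor L) : Prop :=
  ∀ (PK : PrivacyConfig L) (q : ℕ → L.Fml),
    ∃ PKs : ℕ → PrivacyConfig L,
      (∀ i, (PKs i).AK = PK.AK ∧ (PKs i).Sec = PK.Sec) ∧
      (∀ n, ∀ i < n, Cens PK q i = Cens (PKs n) q i) ∧
      (∀ i, ∀ s ∈ PK.Sec, ¬ L.Proves (PKs i).KB s)

/-- A censor is non-refusing iff it never answers `r`. -/
def NonRefusing {L : Logic} (Cens : Censor L) : Prop :=
  ∀ (PK : PrivacyConfig L) (q : ℕ → L.Fml) (i : ℕ), Cens PK q i ≠ Ans.r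

/-- If a truthful, effective, continuous and minimally invasive
censor first distorts the answer at query `i`, then giving the correct answer
at `i` (keeping the earlier answers) would immediately reveal a secret. -/
theorem first_lie_reveals_secret {L : Logic} (Cens : Censor L)
    (htruth : Truthful Cens) (heff : Effective Cens)
    (hcont : ContinuousCensor Cens) (hmin : MinimallyInvasive Cens)
    (PK : PrivacyConfig L) (q : ℕ → L.Fml) (i : ℕ)
    (hi : Cens PK q i ≠ evalKB L PK.KB (q i))
    (hleast : ∀ j < i, Cens PK q j = evalKB L PK.KB (q j))
    (Cens' : Censor L)
    (hpre : ∀ j < i, Cens' PK q j = Cens PK q j)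
    (hcorrect : Cens' PK q i = evalKB L PK.KB (q i)) :
    ∃ s ∈ PK.Sec, Entails (cont Cens' PK q (i + 1)) (MFml.box s) := by
  classical
  let C : Censor L := fun P p j => if j ≤ i then Cens' P p j else Ans.r
  have hC : ∀ j ≤ i, C PK q j = Cens' PK q j := fun j hj => if_pos hj
  have hC2 : ∀ j, ¬ j ≤ i → C PK q j = Ans.r := fun j hj => if_neg hj
  have hev : ∀ j ≤ i, Cens' PK q j = evalKB L PK.KB (q j) := by
    intro j hj
    rcases Nat.lt_or_eq_of_le hj with h | h
    · rw [hpre j h, hleast j h]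
    · rw [h, hcorrect]
  have htop : ∀ M : MModel L, Sat M (MFml.top : MFml L) := fun M h => h
  obtain ⟨n, hn⟩ := hmin PK q i hi C
    (fun j hj => (hC j hj.le).trans (hpre j hj)) ((hC i le_rfl).trans hcorrect)
  rcases hn with ⟨s, hs, hent⟩ | hun
  · refine ⟨s, hs, fun M hM => hent M ?_⟩
    rintro A (⟨j, hj, rfl⟩ | hA)
    · by_cases h : j ≤ i
      · rw [hC j h]
        exact hM _ (Or.inl ⟨j, Nat.lt_succ_of_le h, rfl⟩)
      · rw [hC2 j h]
        exact htop M
    · exact hM _ (Or.inr hA)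
  · exfalso
    apply hun
    refine ⟨{PK.KB}, ?_⟩
    rintro A (⟨j, hj, rfl⟩ | hA)
    · by_cases h : j ≤ i
      · rw [hC j h, hev j h]
        by_cases hp : L.Proves PK.KB (q j)
        · simp only [evalKB, if_pos hp, contAns, Sat]
          rintro w rfl
          exact hp
        · simp only [evalKB, if_neg hp, contAns, MFml.neg, Sat]
          intro hw
          exact hp (hw _ rfl)
      · rw [hC2 j h]
        exact htop _
    · exact PK.truthfulStart A hA
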